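/- Every nonzero polynomial τ ∈ ℂ[t_1, t_3, t_5, …] that is a tau-function of the BKP hierarchy satisfies the simplest Hirota bilinear equation of the BKP hierarchy, (D_1^6 − 5 D_1^3 D_3 − 5 D_3^2 + 9 D_1 D_5) τ·τ = 0; written out (with subscripts denoting partial derivatives in t_1, t_3, t_5): τ τ_{t_1^6} − 6 τ_{t_1} τ_{t_1^5} + 15 τ_{t_1^2} τ_{t_1^4} − 10 (τ_{t_1^3})^2 − 5(τ τ_{t_1^3 t_3} − 3 τ_{t_1} τ_{t_1^2 t_3} + 3 τ_{t_1^2} τ_{t_1 t_3} − τ_{t_1^3} τ_{t_3}) − 5(τ τ_{t_3 t_3} − (τ_{t_3})^2) + 9(τ τ_{t_1 t_5} − τ_{t_1} τ_{t_5}) = 0. -/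

import Mathlib

/-- Elementary Schur polynomials `s_m`, defined in any associative `ℂ`-algebra by the
generating-function recursion `m*s_m = ∑_{k=1}^m k*x_k*s_{m-k}`, which for commuting
arguments is equivalent to `exp(∑_{k≥1} x_k z^k) = ∑_{m≥0} s_m(x) z^m`.
The argument sequence is indexed so that `x (k+1)` is `x_{k+1}`; `x 0` is ignored. -/
noncomputable def schur {A : Type*} [Ring A] [Algebra ℂ A] (x : ℕ → A) : ℕ → A
  | 0 => 1
  | m + 1 =>
      ((m + 1 : ℂ))⁻¹ • ∑ k ∈ Finset.range (m + 1), ((k + 1 : ℂ)) • (x (k + 1) * schur x (m - k))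
  decreasing_by exact Nat.lt_succ_of_le (Nat.sub_le m k)

/-- `R`: polynomial ring ℂ[t₁,t₃,t₅,…]; variable `i : ℕ` stands for `t_{2i+1}`. -/
abbrev ROdd : Type := MvPolynomial ℕ ℂ

/-- `ℂ[t,t']`: `Sum.inl i` is `t_{2i+1}`, `Sum.inr i` is `t'_{2i+1}`. -/
abbrev RTwo : Type := MvPolynomial (ℕ ⊕ ℕ) ℂ

/-- `τ(t)·τ(t') ∈ ℂ[t,t']`. -/
noncomputable def doubling (τ : ROdd) : RTwo :=
  MvPolynomial.rename Sum.inl τ * MvPolynomial.rename Sum.inr τ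

/-- The sequence ã with `ã_{2j-1} = t_{2j-1} - t'_{2j-1}` and `ã_{2j} = 0`. -/
noncomputable def aSeq : ℕ → RTwo := fun j =>
  if Odd j then MvPolynomial.X (Sum.inl ((j - 1) / 2)) - MvPolynomial.X (Sum.inr ((j - 1) / 2))
  else 0

/-- The commuting derivations b̃ with
`b̃_{2j-1} = (2/(2j-1)) (∂/∂t'_{2j-1} - ∂/∂t_{2j-1})` and `b̃_{2j} = 0`. -/
noncomputable def bSeq : ℕ → Module.End ℂ RTwo := fun j =>
  if Odd j then
    ((2 : ℂ) / (j : ℂ)) •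
      ((MvPolynomial.pderiv (Sum.inr ((j - 1) / 2))).toLinearMap -
        (MvPolynomial.pderiv (Sum.inl ((j - 1) / 2))).toLinearMap)
  else 0

/-- `Ω_{-M}(τ) = ∑_{k≥0} s_k(ã) · s_{k+M}(b̃)(τ(t)τ(t'))`. -/
noncomputable def OmegaNeg (M : ℕ) (τ : ROdd) : RTwo :=
  ∑ᶠ k : ℕ, schur aSeq k * (schur bSeq (k + M)) (doubling τ)

/-- The partial derivative `∂/∂t_{2i+1}` as a `ℂ`-linear endomorphism of `ROdd`. -/
noncomputable def d (i : ℕ) : Module.End ℂ ROdd := (MvPolynomial.pderiv i).toLinearMap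


theorem schur_zero' {A : Type*} [Ring A] [Algebra ℂ A] (x : ℕ → A) : schur x 0 = 1 := by
  rw [schur]

theorem schur_succ_smul {A : Type*} [Ring A] [Algebra ℂ A] (x : ℕ → A) (m : ℕ) :
    ((m + 1 : ℂ)) • schur x (m + 1) =
      ∑ k ∈ Finset.range (m + 1), ((k + 1 : ℂ)) • (x (k + 1) * schur x (m - k)) := by
  rw [schur, smul_smul, mul_inv_cancel₀ (by exact_mod_cast Nat.succ_ne_zero m), one_smul]

/-- derivative in the difference variable -/
noncomputable def dl (i : ℕ) : Derivation ℂ RTwo RTwo :=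
  MvPolynomial.pderiv (Sum.inl i) - MvPolynomial.pderiv (Sum.inr i)

/-- restriction to the diagonal -/
noncomputable def dg : RTwo →ₐ[ℂ] ROdd :=
  MvPolynomial.aeval (Sum.elim MvPolynomial.X MvPolynomial.X)

theorem dg_aSeq (j : ℕ) : dg (aSeq j) = 0 := by
  unfold aSeq dg
  split_ifs <;> simp

theorem dl_aSeq (i j : ℕ) : dl i (aSeq j) = if j = 2 * i + 1 then 2 else 0 := by
  unfold aSeq dl
  split_ifs with h1 h2 h2
  · subst h2
    have : (2 * i + 1 - 1) / 2 = i := by omega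
    rw [this]
    simp [MvPolynomial.pderiv_X]
    norm_num
  · have : (j - 1) / 2 ≠ i := by
      obtain ⟨r, rfl⟩ := h1; omega
    simp [MvPolynomial.pderiv_X, this]
  · exact absurd ⟨i, h2⟩ h1
  · simp

theorem dg_schur (k : ℕ) : dg (schur aSeq k) = if k = 0 then 1 else 0 := by
  rcases k with _ | m
  · simp [schur_zero']
  · rw [schur]
    simp [dg_aSeq]

theorem dl_schur (i m : ℕ) : dl i (schur aSeq m) =
    if 2 * i + 1 ≤ m then (2 : ℂ) • schur aSeq (m - (2 * i + 1)) else 0 := by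
  induction m using Nat.strong_induction_on with
  | _ m ih =>
    rcases m with _ | m
    · simp [schur_zero']
    have hm : (m + 1 : ℂ) ≠ 0 := by exact_mod_cast Nat.succ_ne_zero m
    apply smul_right_injective RTwo hm
    simp only
    rw [← Derivation.map_smul, schur_succ_smul, map_sum]
    have e1 : ∀ k ∈ Finset.range (m + 1),
        dl i ((k + 1 : ℂ) • (aSeq (k + 1) * schur aSeq (m - k))) =
        (if k = 2 * i then ((2 : ℂ) * (k + 1)) • schur aSeq (m - k) else 0) +
        (if k + (2 * i + 1) ≤ m then
          (2 : ℂ) • ((k + 1 : ℂ) • (aSeq (k + 1) * schur aSeq (m - (2 * i + 1) - k))) else 0) := by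
      intro k hk
      have hk' := Finset.mem_range.1 hk
      rw [Derivation.map_smul, Derivation.leibniz, dl_aSeq, ih (m - k) (by omega), smul_add, add_comm]
      congr 1
      · by_cases h : k = 2 * i
        · simp only [h, if_true, smul_eq_mul]
          rw [mul_two]
          module
        · rw [if_neg (by omega), if_neg h]; simp
      · by_cases h : k + (2 * i + 1) ≤ m
        · rw [if_pos (by omega), if_pos h, smul_eq_mul, mul_smul_comm, smul_comm]
          have e : m - k - (2 * i + 1) = m - (2 * i + 1) - k := by omega
          rw [e]
        · rw [if_neg (by omega), if_neg h]; simp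
    rw [Finset.sum_congr rfl e1, Finset.sum_add_distrib, Finset.sum_ite_eq']
    by_cases h : 2 * i + 1 ≤ m + 1
    · rw [if_pos (by simp; omega), if_pos h, ← Finset.sum_filter]
      rcases Nat.eq_or_lt_of_le h with h | h
      · have : m = 2 * i := by omega
        subst this
        rw [Finset.sum_eq_zero]
        · simp [smul_smul, mul_comm]
        · intro k hk; simp at hk; omega
      · obtain ⟨n, rfl⟩ : ∃ n, m = n + (2 * i + 1) := ⟨m - (2 * i + 1), by omega⟩
        have : Finset.filter (fun k => k + (2 * i + 1) ≤ n + (2 * i + 1))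
            (Finset.range (n + (2 * i + 1) + 1)) = Finset.range (n + 1) := by
          ext k; simp; omega
        rw [this, ← Finset.smul_sum]
        have e2 : n + (2 * i + 1) - (2 * i + 1) = n := by omega
        have e3 : n + (2 * i + 1) + 1 - (2 * i + 1) = n + 1 := by omega
        have e4 : n + (2 * i + 1) - 2 * i = n + 1 := by omega
        rw [e2, e3, e4, ← schur_succ_smul]
        push_cast
        module
    · rw [if_neg (by simp; omega), if_neg h, Finset.sum_eq_zero]
      · simp
      · intro k hk; rw [if_neg (by omega)]


theorem term_eq (k : ℕ) (G : RTwo) : dg (dl 0 (dl 2 (schur aSeq k * G))) =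
    (if k = 0 then dg (dl 0 (dl 2 G)) else 0) + (if k = 1 then (2 : ℂ) • dg (dl 2 G) else 0)
     + (if k = 5 then (2 : ℂ) • dg (dl 0 G) else 0) + (if k = 6 then (4 : ℂ) • dg G else 0) := by
  have e : dl 0 (dl 2 (schur aSeq k * G)) = schur aSeq k * dl 0 (dl 2 G)
      + dl 0 (schur aSeq k) * dl 2 G + dl 2 (schur aSeq k) * dl 0 G
      + dl 0 (dl 2 (schur aSeq k)) * G := by
    simp only [Derivation.leibniz, map_add, smul_eq_mul]
    ring
  rw [e, map_add, map_add, map_add, map_mul, map_mul, map_mul, map_mul, dg_schur]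
  congr 1
  · congr 1
    · congr 1
      · split_ifs <;> simp
      · rw [dl_schur]
        split_ifs with h1 h2 h2
        · subst h2; simp [schur_zero']
        · rw [map_smul, dg_schur, if_neg (by omega)]; simp
        · omega
        · simp
    · rw [dl_schur]
      split_ifs with h1 h2 h2
      · subst h2; simp [schur_zero']
      · rw [map_smul, dg_schur, if_neg (by omega)]; simp
      · omega
      · simp
  · rw [dl_schur]
    split_ifs with h1 h2 h2
    · subst h2
      rw [Derivation.map_smul, dl_schur]
      simp [schur_zero', smul_smul]
      norm_num
    · rw [Derivation.map_smul, dl_schur]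
      split_ifs with h3
      · rw [map_smul, map_smul, dg_schur, if_neg (by omega)]; simp
      · simp
    · omega
    · simp

/-- `f(t)` -/
noncomputable def LL (f : ROdd) : RTwo := MvPolynomial.rename Sum.inl f
/-- second copy -/
noncomputable def RR (f : ROdd) : RTwo := MvPolynomial.rename Sum.inr f

theorem dl_LR (i : ℕ) (f g : ROdd) :
    dl i (LL f * RR g) = LL (d i f) * RR g - LL f * RR (d i g) := by
  have h1 : MvPolynomial.pderiv (Sum.inr i : ℕ ⊕ ℕ) (LL f) = 0 := by
    apply MvPolynomial.pderiv_eq_zero_of_notMem_vars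
    intro h
    have := MvPolynomial.vars_rename _ _ h
    simp at this
  have h2 : MvPolynomial.pderiv (Sum.inl i : ℕ ⊕ ℕ) (RR g) = 0 := by
    apply MvPolynomial.pderiv_eq_zero_of_notMem_vars
    intro h
    have := MvPolynomial.vars_rename _ _ h
    simp at this
  have h3 : MvPolynomial.pderiv (Sum.inl i : ℕ ⊕ ℕ) (LL f) = LL (d i f) :=
    MvPolynomial.pderiv_rename Sum.inl_injective i f
  have h4 : MvPolynomial.pderiv (Sum.inr i : ℕ ⊕ ℕ) (RR g) = RR (d i g) :=
    MvPolynomial.pderiv_rename Sum.inr_injective i g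
  rw [dl, Derivation.sub_apply, Derivation.leibniz, Derivation.leibniz, h1, h2, h3, h4]
  simp only [smul_eq_mul]
  ring

theorem dg_LR (f g : ROdd) : dg (LL f * RR g) = f * g := by
  rw [map_mul, dg, LL, RR, MvPolynomial.aeval_rename, MvPolynomial.aeval_rename]
  simp

theorem pderiv_comm' {σ : Type*} (i j : σ) (f : MvPolynomial σ ℂ) :
    MvPolynomial.pderiv i (MvPolynomial.pderiv j f)
      = MvPolynomial.pderiv j (MvPolynomial.pderiv i f) := by
  classical
  have h : ⁅(MvPolynomial.pderiv i : Derivation ℂ (MvPolynomial σ ℂ) (MvPolynomial σ ℂ)),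
      (MvPolynomial.pderiv j : Derivation ℂ (MvPolynomial σ ℂ) (MvPolynomial σ ℂ))⁆
      = 0 := by
    apply MvPolynomial.derivation_ext
    intro k
    rw [Derivation.commutator_apply, MvPolynomial.pderiv_X, MvPolynomial.pderiv_X]
    simp [Pi.single_apply, apply_ite]
  have := congrArg (fun D => D f) h
  simp only [Derivation.commutator_apply] at this
  exact sub_eq_zero.1 this

theorem d_comm (i j : ℕ) (f : ROdd) : d i (d j f) = d j (d i f) := pderiv_comm' i j f

theorem dl_comm (i j : ℕ) (f : RTwo) : dl i (dl j f) = dl j (dl i f) := by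
  simp only [dl, Derivation.sub_apply, map_sub]
  rw [pderiv_comm' (Sum.inl i) (Sum.inl j), pderiv_comm' (Sum.inl i) (Sum.inr j),
    pderiv_comm' (Sum.inr i) (Sum.inl j), pderiv_comm' (Sum.inr i) (Sum.inr j)]
  abel

theorem bSeq_apply (j : ℕ) (G : RTwo) : ((j + 1 : ℂ)) • (bSeq (j + 1)) G =
    if j % 2 = 0 then (-2 : ℂ) • dl (j / 2) G else 0 := by
  have hj : (j + 1 : ℂ) ≠ 0 := by exact_mod_cast Nat.succ_ne_zero j
  unfold bSeq
  by_cases h : j % 2 = 0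
  · have h' : Odd (j + 1) := by rw [Nat.odd_iff]; omega
    rw [if_pos h', if_pos h]
    simp only [LinearMap.smul_apply, LinearMap.sub_apply, Derivation.coeFn_coe, smul_smul, dl, Derivation.sub_apply, Nat.add_sub_cancel]
    push_cast
    rw [mul_div_cancel₀ _ hj]
    module
  · have h' : ¬ Odd (j + 1) := by rw [Nat.odd_iff]; omega
    rw [if_neg h', if_neg h]
    simp

theorem schur_bSeq_succ (m : ℕ) (F : RTwo) : (schur bSeq (m + 1)) F =
    ((m + 1 : ℂ))⁻¹ • ∑ k ∈ Finset.range (m + 1),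
      (if k % 2 = 0 then (-2 : ℂ) • dl (k / 2) ((schur bSeq (m - k)) F) else 0) := by
  rw [schur]
  simp only [LinearMap.smul_apply, LinearMap.sum_apply, Module.End.mul_apply, bSeq_apply]

theorem hirota_words (F : RTwo) (h : (2 : ℂ) • dg (dl 2 ((schur bSeq 1) F))
    + (2 : ℂ) • dg (dl 0 ((schur bSeq 5) F)) + (4 : ℂ) • dg ((schur bSeq 6) F) = 0) :
    dg (dl 0 (dl 0 (dl 0 (dl 0 (dl 0 (dl 0 F)))))) - (5 : ℂ) • dg (dl 0 (dl 0 (dl 0 (dl 1 F))))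
      - (5 : ℂ) • dg (dl 1 (dl 1 F)) + (9 : ℂ) • dg (dl 0 (dl 2 F)) = 0 := by
  have s0 : (schur bSeq 0) F = F := by rw [schur]; rfl
  have s1 : (schur bSeq 1) F = (-2 : ℂ) • dl 0 F := by
    rw [schur_bSeq_succ]; simp [Finset.sum_range_succ, s0]
  have s2 : (schur bSeq 2) F = (2 : ℂ) • dl 0 (dl 0 F) := by
    rw [schur_bSeq_succ]; simp [Finset.sum_range_succ, s0, s1]; module
  have s3 : (schur bSeq 3) F = (-4/3 : ℂ) • dl 0 (dl 0 (dl 0 F)) + (-2/3 : ℂ) • dl 1 F := by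
    rw [schur_bSeq_succ]; simp [Finset.sum_range_succ, s0, s1, s2]; module
  have s4 : (schur bSeq 4) F = (2/3 : ℂ) • dl 0 (dl 0 (dl 0 (dl 0 F)))
      + (4/3 : ℂ) • dl 0 (dl 1 F) := by
    rw [schur_bSeq_succ]; simp [Finset.sum_range_succ, s0, s1, s2, s3, dl_comm 1 0]; module
  have s5 : (schur bSeq 5) F = (-4/15 : ℂ) • dl 0 (dl 0 (dl 0 (dl 0 (dl 0 F))))
      + (-4/3 : ℂ) • dl 0 (dl 0 (dl 1 F)) + (-2/5 : ℂ) • dl 2 F := by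
    rw [schur_bSeq_succ]; simp [Finset.sum_range_succ, s0, s1, s2, s3, s4, dl_comm 1 0]; module
  have s6 : (schur bSeq 6) F = (4/45 : ℂ) • dl 0 (dl 0 (dl 0 (dl 0 (dl 0 (dl 0 F)))))
      + (8/9 : ℂ) • dl 0 (dl 0 (dl 0 (dl 1 F))) + (2/9 : ℂ) • dl 1 (dl 1 F)
      + (4/5 : ℂ) • dl 0 (dl 2 F) := by
    rw [schur_bSeq_succ]
    simp [Finset.sum_range_succ, s0, s1, s2, s3, s4, s5, dl_comm 1 0, dl_comm 2 0]; module
  rw [s1, s5, s6] at h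
  simp only [map_add, map_smul, Derivation.map_smul, dl_comm 2 0] at h
  have h' := congrArg (fun z : ROdd => (-45/8 : ℂ) • z) h
  simp only [smul_zero] at h'
  rw [← h']
  module

/-- every nonzero polynomial BKP tau-function satisfies the simplest
Hirota bilinear equation `(D₁⁶ - 5 D₁³D₃ - 5 D₃² + 9 D₁D₅) τ·τ = 0`, written out in
terms of partial derivatives in `t₁ = X 0`, `t₃ = X 1`, `t₅ = X 2`. -/
theorem bkp_tau_hirota (τ : ROdd) (hτ : τ ≠ 0) (hBKP : OmegaNeg 0 τ = doubling τ) :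
    τ * (d 0 ^ 6) τ - 6 * d 0 τ * (d 0 ^ 5) τ + 15 * (d 0 ^ 2) τ * (d 0 ^ 4) τ
        - 10 * ((d 0 ^ 3) τ) ^ 2
      - 5 * (τ * (d 0 ^ 3) (d 1 τ) - 3 * d 0 τ * (d 0 ^ 2) (d 1 τ)
          + 3 * (d 0 ^ 2) τ * d 0 (d 1 τ) - (d 0 ^ 3) τ * d 1 τ)
      - 5 * (τ * d 1 (d 1 τ) - (d 1 τ) ^ 2)
      + 9 * (τ * d 0 (d 2 τ) - d 0 τ * d 2 τ) = 0 := by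
  have hF : doubling τ = LL τ * RR τ := rfl
  have hF0 : doubling τ ≠ 0 := by
    rw [doubling]
    refine mul_ne_zero ?_ ?_
    · rw [Ne, MvPolynomial.rename_eq_zero_iff_of_injective _ Sum.inl_injective]
      exact hτ
    · rw [Ne, MvPolynomial.rename_eq_zero_iff_of_injective _ Sum.inr_injective]
      exact hτ
  have hfin : (Function.support
      fun k : ℕ => schur aSeq k * (schur bSeq (k + 0)) (doubling τ)).Finite := by
    by_contra hinf
    apply hF0
    rw [← hBKP, OmegaNeg]
    exact finsum_of_infinite_support hinf
  have key : (2 : ℂ) • dg (dl 2 ((schur bSeq 1) (doubling τ)))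
      + (2 : ℂ) • dg (dl 0 ((schur bSeq 5) (doubling τ)))
      + (4 : ℂ) • dg ((schur bSeq 6) (doubling τ)) = 0 := by
    have h1 := congrArg (fun G => dg (dl 0 (dl 2 G))) hBKP
    simp only [OmegaNeg] at h1
    rw [finsum_eq_sum_of_support_subset (s := hfin.toFinset ∪ Finset.range 7) _
      (by intro k hk; simpa using Or.inl hk)] at h1
    simp only [map_sum, term_eq, Finset.sum_add_distrib, Finset.sum_ite_eq'] at h1
    have s0 : (schur bSeq 0) (doubling τ) = doubling τ := by rw [schur]; rfl
    simp only [Finset.mem_union, Finset.mem_range, Nat.add_zero, s0] at h1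
    norm_num at h1
    linear_combination h1
  have hw := hirota_words _ key
  rw [hF] at hw
  simp only [dl_LR, map_sub, dg_LR, d_comm 1 0, d_comm 2 0] at hw
  simp only [pow_succ, pow_zero, one_mul, Module.End.mul_apply]
  simp only [MvPolynomial.smul_eq_C_mul, map_ofNat] at hw
  have h2 : (2 : ROdd) ≠ 0 := two_ne_zero
  apply mul_left_cancel₀ h2
  linear_combination hw
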